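/- arXiv:1801.10072 — 2 statements merged into one kernel-verified Lean document; each statement's English description precedes it below -/
import Mathlib

section
/- Klein's theorem for the upper sail: let ω > 0 be an irrational real number with continued fraction expansion ω = [a₀; a₁, a₂, …] and convergents pₖ/qₖ. Then the set of extreme points of the convex hull of the set S = {(x, y) ∈ ℤ² : x ≥ 0, y ≥ ωx, (x, y) ≠ (0, 0)} is exactly {(0, 1)} ∪ {(q₂ₖ₊₁, p₂ₖ₊₁) : k ≥ 0}, i.e. the sail vertices of the angle between the ray y = ωx (x > 0) and the positive y-axis are the odd-index convergents. -/
/-- `a` is the sequence of partial quotients of the (regular) continued fraction expansion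
`ω = [a₀; a₁, a₂, …]`: there is a sequence of complete quotients `w` with `w 0 = ω`,
`aₙ = ⌊wₙ⌋` and `wₙ₊₁ = 1/(wₙ − aₙ)`. -/
def IsCFExpansion (ω : ℝ) (a : ℕ → ℤ) : Prop :=
  ∃ w : ℕ → ℝ, w 0 = ω ∧ ∀ n, a n = ⌊w n⌋ ∧ w (n + 1) = 1 / (w n - (a n : ℝ))

/-- `p k / q k` are the convergents of the continued fraction with partial quotients `a`:
`p₋₁ = 1, q₋₁ = 0, p₋₂ = 0, q₋₂ = 1` and `pₖ = aₖpₖ₋₁ + pₖ₋₂`, `qₖ = aₖqₖ₋₁ + qₖ₋₂`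
(spelled out for `k = 0, 1` to avoid negative indices). -/
def IsConvergents (a : ℕ → ℤ) (p q : ℕ → ℤ) : Prop :=
  p 0 = a 0 ∧ q 0 = 1 ∧ p 1 = a 1 * a 0 + 1 ∧ q 1 = a 1 ∧
    ∀ k : ℕ, p (k + 2) = a (k + 2) * p (k + 1) + p k ∧
      q (k + 2) = a (k + 2) * q (k + 1) + q k

/-!
Write `u n = (qₙ₋₁, pₙ₋₁)`, so that `u 0 = (0, 1)` and the claimed vertices are the `u (2k)`. The
height `y - ωx` alternates in sign along `u`, and consecutive vectors form a basis of `ℤ²`.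

A lattice vector `d` with positive first coordinate and nonpositive height has determinant
`d₁ height(z) - z₁ height(d) > 0`, hence at least `1`, with every point `z` of the lattice cone. For
`v = u (2k)` and `d = u (2k+1)` this applies to both `d` and `d - v`, and both determinants equal
`1` at `v`, so `v` is extreme.

Conversely, an extreme point `z` is a lattice point which is not a sum of two points of the
lattice cone. Its determinants with the vectors `u (2k)` decrease from a nonnegative value to
negative ones, which locates `z = n d + f v` in the cone spanned by `u (2k)` and `u (2k+2)`.
Indecomposability forces `f = 1`, so `z` lies on the edge from `u (2k)` to `u (2k+2)`, and it is
not interior to that edge.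
-/

section Extreme

variable {𝕜 E : Type*}

lemma isExtreme_setOf_apply_eq [CommRing 𝕜] [LinearOrder 𝕜] [IsStrictOrderedRing 𝕜]
    [AddCommGroup E] [Module 𝕜 E] {A : Set E} (l : E →ₗ[𝕜] 𝕜) {c : 𝕜} (h : ∀ z ∈ A, c ≤ l z) :
    IsExtreme 𝕜 A {z ∈ A | l z = c} := by
  refine ⟨Set.sep_subset A _, fun x hx y hy z hz ⟨s, t, hs, ht, hst, hsum⟩ ↦ ⟨hx, ?_⟩⟩
  have hmean : s * l x + t * l y = s * c + t * c := by
    rw [← add_mul, hst, one_mul, ← hz.2, ← hsum]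
    simp only [map_add, map_smul, smul_eq_mul]
  have hy' : t * c ≤ t * l y := mul_le_mul_of_nonneg_left (h y hy) ht.le
  exact le_antisymm (le_of_mul_le_mul_left (by linarith) hs) (h x hx)

variable [Field 𝕜] [LinearOrder 𝕜] [IsStrictOrderedRing 𝕜] [AddCommGroup E] [Module 𝕜 E]

lemma notMem_extremePoints_of_sub_mem_of_add_mem {A : Set E} {x v : E} (hv : v ≠ 0)
    (hsub : x - v ∈ A) (hadd : x + v ∈ A) : x ∉ A.extremePoints 𝕜 := fun hx ↦
  hv (sub_eq_self.1 (hx.2 hsub hadd (mem_openSegment_sub_add x v)))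

lemma add_notMem_extremePoints_convexHull {S : AddSubsemigroup E} (h0 : (0 : E) ∉ S) {x y : E}
    (hx : x ∈ S) (hy : y ∈ S) : x + y ∉ (convexHull 𝕜 (S : Set E)).extremePoints 𝕜 := by
  have hull {z : E} (hz : z ∈ S) : z ∈ convexHull 𝕜 (S : Set E) := subset_convexHull 𝕜 _ hz
  rcases eq_or_ne x y with rfl | hxy
  · refine notMem_extremePoints_of_sub_mem_of_add_mem (ne_of_mem_of_not_mem hx h0) (hull ?_)
      (hull (S.add_mem (S.add_mem hx hx) hx))
    rwa [add_sub_cancel_right]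
  · refine notMem_extremePoints_of_sub_mem_of_add_mem (sub_ne_zero.2 hxy) (hull ?_) (hull ?_)
    · convert S.add_mem hy hy using 1
      abel
    · convert S.add_mem hx hx using 1
      abel

end Extreme

section PlaneDet

variable {R : Type*} [CommRing R]

/-- The determinant of two vectors of the plane, as a linear form in the second one. -/
def planeDet (u : R × R) : R × R →ₗ[R] R := u.1 • LinearMap.snd R R R - u.2 • LinearMap.fst R R R

lemma planeDet_apply (u v : R × R) : planeDet u v = u.1 * v.2 - u.2 * v.1 := rfl

lemma planeDet_swap (u v : R × R) : planeDet u v = -planeDet v u := by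
  simp only [planeDet_apply]
  ring

lemma eq_smul_add_smul_of_planeDet_eq_one {d v : R × R} (h : planeDet d v = 1) (m : R × R) :
    m = planeDet m v • d + planeDet d m • v := by
  simp only [planeDet_apply] at *
  ext
  · simp only [Prod.fst_add, Prod.smul_fst, smul_eq_mul]
    linear_combination -m.1 * h
  · simp only [Prod.snd_add, Prod.smul_snd, smul_eq_mul]
    linear_combination -m.2 * h

lemma eq_of_planeDet_eq_one {d v z : R × R} (hv : planeDet d v = 1) (hz : planeDet d z = 1)
    (hz' : planeDet (d - v) z = 1) : z = v := by
  have hzv : planeDet z v = 0 := by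
    simp only [planeDet_apply, Prod.fst_sub, Prod.snd_sub] at *
    linear_combination hz' - hz
  rw [eq_smul_add_smul_of_planeDet_eq_one hv z, hzv, hz, zero_smul, one_smul, zero_add]

end PlaneDet

section UpperLattice

/-- The inclusion of the integer lattice in the real plane. -/
def toPlane : ℤ × ℤ →+ ℝ × ℝ := (Int.castAddHom ℝ).prodMap (Int.castAddHom ℝ)

lemma toPlane_apply (m : ℤ × ℤ) : toPlane m = ((m.1 : ℝ), (m.2 : ℝ)) := rfl

lemma toPlane_ne_zero {m : ℤ × ℤ} (hm : m ≠ 0) : toPlane m ≠ 0 := by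
  simpa [toPlane_apply, Prod.ext_iff] using hm

lemma planeDet_toPlane (m n : ℤ × ℤ) : planeDet (toPlane m) (toPlane n) = (planeDet m n : ℤ) := by
  simp [toPlane_apply, planeDet_apply]

/-- The signed vertical distance `y - ωx` of a lattice point from the line of slope `ω`. -/
def height (ω : ℝ) : ℤ × ℤ →+ ℝ := (planeDet (1, ω)).toAddMonoidHom.comp toPlane

lemma height_apply (ω : ℝ) (m : ℤ × ℤ) : height ω m = m.2 - ω * m.1 := by
  simp [height, toPlane_apply, planeDet_apply]

lemma height_ne_zero {ω : ℝ} (hirr : Irrational ω) {m : ℤ × ℤ} (hm : m ≠ 0) :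
    height ω m ≠ 0 := by
  rw [height_apply, sub_ne_zero]
  rcases eq_or_ne m.1 0 with h1 | h1
  · have h2 : m.2 ≠ 0 := fun h2 ↦ hm (Prod.ext h1 h2)
    simpa [h1] using h2
  · exact ((hirr.mul_intCast h1).ne_int m.2).symm

/-- The semigroup of nonzero lattice points in the angle between the positive `y`-axis and the
ray of slope `ω`. -/
def upperLattice (ω : ℝ) : AddSubsemigroup (ℝ × ℝ) where
  carrier := {v : ℝ × ℝ | ∃ x y : ℤ,
    v = ((x : ℝ), (y : ℝ)) ∧ 0 ≤ x ∧ ω * (x : ℝ) ≤ (y : ℝ) ∧ (x, y) ≠ ((0 : ℤ), (0 : ℤ))}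
  add_mem' := by
    rintro _ _ ⟨x, y, rfl, hx, hxy, hne⟩ ⟨x', y', rfl, hx', hxy', -⟩
    refine ⟨x + x', y + y', by simp, by lia, by push_cast; linarith, fun h ↦ hne ?_⟩
    obtain ⟨hx0, hy0⟩ := Prod.mk.inj h
    obtain ⟨rfl, rfl⟩ : x = 0 ∧ x' = 0 := by lia
    have hy : 0 ≤ y := by simpa using hxy
    have hy' : 0 ≤ y' := by simpa using hxy'
    simp only [Prod.mk.injEq, true_and]
    lia

variable {ω : ℝ} {m d v : ℤ × ℤ} {b n f : ℤ}

lemma zero_notMem_upperLattice : (0 : ℝ × ℝ) ∉ upperLattice ω := by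
  rintro ⟨x, y, h, -, -, hne⟩
  simp_all [Prod.ext_iff, eq_comm (a := (0 : ℝ))]

lemma toPlane_mem_upperLattice (hm : 0 ≤ m.1) (hh : 0 < height ω m) :
    toPlane m ∈ upperLattice ω :=
  ⟨m.1, m.2, rfl, hm, by linarith [height_apply ω m], fun h ↦ hh.ne' (by
    rw [show m = 0 from h, map_zero])⟩

lemma exists_toPlane_eq_of_mem_upperLattice (hirr : Irrational ω) {z : ℝ × ℝ}
    (hz : z ∈ upperLattice ω) : ∃ m : ℤ × ℤ, 0 ≤ m.1 ∧ 0 < height ω m ∧ toPlane m = z := by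
  obtain ⟨x, y, rfl, hx, hxy, hne⟩ := hz
  refine ⟨(x, y), hx, lt_of_le_of_ne ?_ (height_ne_zero hirr hne).symm, rfl⟩
  rw [height_apply]
  linarith

section Vertex

lemma one_le_planeDet (hm : 0 ≤ m.1) (hmh : 0 < height ω m) (hd : 0 < d.1) (hdh : height ω d ≤ 0) :
    1 ≤ planeDet d m := by
  have hdet : ((planeDet d m : ℤ) : ℝ) = d.1 * height ω m - m.1 * height ω d := by
    simp only [planeDet_apply, height_apply]
    push_cast
    ring
  have hpos : (0 : ℝ) < (planeDet d m : ℤ) := by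
    rw [hdet]
    have h₁ : 0 < d.1 * height ω m := mul_pos (Int.cast_pos.2 hd) hmh
    have h₂ : m.1 * height ω d ≤ 0 :=
      mul_nonpos_of_nonneg_of_nonpos (Int.cast_nonneg hm) hdh
    linarith
  exact Int.cast_pos.1 hpos

lemma one_le_planeDet_of_mem_convexHull (hirr : Irrational ω) (hd : 0 < d.1)
    (hdh : height ω d ≤ 0) {z : ℝ × ℝ} (hz : z ∈ convexHull ℝ (upperLattice ω : Set (ℝ × ℝ))) :
    1 ≤ planeDet (toPlane d) z := by
  refine convexHull_min (fun z hz ↦ ?_) (convex_halfSpace_ge (planeDet (toPlane d)).isLinear 1) hz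
  obtain ⟨m, hm, hmh, rfl⟩ := exists_toPlane_eq_of_mem_upperLattice hirr hz
  rw [Set.mem_ofPred_eq, planeDet_toPlane]
  exact_mod_cast one_le_planeDet hm hmh hd hdh

lemma toPlane_mem_extremePoints_of_planeDet_eq_one (hirr : Irrational ω) (hv : 0 ≤ v.1)
    (hvd : v.1 < d.1) (hvh : 0 < height ω v) (hdh : height ω d ≤ 0) (hdv : planeDet d v = 1) :
    toPlane v ∈ (convexHull ℝ (upperLattice ω : Set (ℝ × ℝ))).extremePoints ℝ := by
  set K := convexHull ℝ (upperLattice ω : Set (ℝ × ℝ))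
  have hdvh : height ω (d - v) ≤ 0 := by
    rw [map_sub]
    linarith
  have hd_face : IsExtreme ℝ K {z ∈ K | planeDet (toPlane d) z = 1} :=
    isExtreme_setOf_apply_eq _ fun z ↦
      one_le_planeDet_of_mem_convexHull hirr (hv.trans_lt hvd) hdh
  have hdv_face : IsExtreme ℝ K {z ∈ K | planeDet (toPlane (d - v)) z = 1} :=
    isExtreme_setOf_apply_eq _ fun z ↦
      one_le_planeDet_of_mem_convexHull hirr (sub_pos.2 hvd) hdvh
  have hdv' : planeDet (toPlane d) (toPlane v) = 1 := by rw [planeDet_toPlane, hdv, Int.cast_one]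
  have hvv : planeDet (toPlane (d - v)) (toPlane v) = 1 := by
    rw [← hdv']
    simp only [map_sub, planeDet_apply, Prod.fst_sub, Prod.snd_sub]
    ring
  have hvK : toPlane v ∈ K := subset_convexHull ℝ _ (toPlane_mem_upperLattice hv hvh)
  rw [← isExtreme_singleton]
  convert hd_face.inter hdv_face
  refine Set.Subset.antisymm ?_ ?_
  · rintro _ rfl
    exact ⟨⟨hvK, hdv'⟩, hvK, hvv⟩
  · rintro z ⟨⟨-, hz⟩, -, hz'⟩
    rw [map_sub] at hz'
    exact eq_of_planeDet_eq_one hdv' hz hz'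

end Vertex

section Edge

lemma toPlane_smul_add_smul_mem_upperLattice (hd : 0 ≤ d.1) (hv : 0 ≤ v.1)
    (hdh : height ω d ≤ 0) (hbh : 0 < height ω (b • d + v)) (hn : 0 ≤ n) (hf : 0 < f)
    (hnf : n ≤ b * f) : toPlane (n • d + f • v) ∈ upperLattice ω := by
  apply toPlane_mem_upperLattice
  · simp only [Prod.fst_add, Prod.smul_fst, smul_eq_mul]
    positivity
  · have hsplit : n • d + f • v = f • (b • d + v) + (n - b * f) • d := by module
    have hfar : 0 < f • height ω (b • d + v) := smul_pos hf hbh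
    have hback : 0 ≤ (n - b * f) • height ω d := smul_nonneg_of_nonpos_of_nonpos (by lia) hdh
    rw [hsplit, map_add, map_zsmul, map_zsmul]
    exact add_pos_of_pos_of_nonneg hfar hback

lemma eq_one_of_smul_add_smul_mem_extremePoints (hd : 0 ≤ d.1) (hv : 0 ≤ v.1)
    (hdh : height ω d ≤ 0) (hbh : 0 < height ω (b • d + v)) (hn : 0 ≤ n) (hf : 0 < f)
    (hnf : n ≤ b * f) (hz : toPlane (n • d + f • v) ∈
      (convexHull ℝ (upperLattice ω : Set (ℝ × ℝ))).extremePoints ℝ) : f = 1 := by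
  by_contra hf1
  obtain ⟨i, hi, hib, hin, hnib⟩ : ∃ i, 0 ≤ i ∧ i ≤ b * 1 ∧ 0 ≤ n - i ∧ n - i ≤ b * (f - 1) := by
    have hb : 0 ≤ b := nonneg_of_mul_nonneg_left (hn.trans hnf) hf
    rcases le_total n b with h | h
    · exact ⟨n, hn, by lia, by lia, by nlinarith⟩
    · exact ⟨b, hb, by lia, by lia, by nlinarith⟩
  have hsplit : n • d + f • v = (i • d + (1 : ℤ) • v) + ((n - i) • d + (f - 1) • v) := by module
  rw [hsplit, map_add] at hz
  exact add_notMem_extremePoints_convexHull zero_notMem_upperLattice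
    (toPlane_smul_add_smul_mem_upperLattice hd hv hdh hbh hi one_pos hib)
    (toPlane_smul_add_smul_mem_upperLattice hd hv hdh hbh hin (by lia) hnib) hz

lemma eq_zero_of_smul_add_mem_extremePoints (hd : 0 < d.1) (hv : 0 ≤ v.1)
    (hdh : height ω d ≤ 0) (hbh : 0 < height ω (b • d + v)) (hn : 0 ≤ n) (hnb : n < b)
    (hz : toPlane (n • d + v) ∈
      (convexHull ℝ (upperLattice ω : Set (ℝ × ℝ))).extremePoints ℝ) : n = 0 := by
  by_contra hn0
  have hull {i : ℤ} (hi : 0 ≤ i) (hib : i ≤ b) :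
      toPlane (i • d + v) ∈ convexHull ℝ (upperLattice ω : Set (ℝ × ℝ)) := by
    apply subset_convexHull
    simpa only [one_smul, SetLike.mem_coe] using
      toPlane_smul_add_smul_mem_upperLattice hd.le hv hdh hbh hi one_pos (by lia : i ≤ b * 1)
  have hd0 : d ≠ 0 := by
    rintro rfl
    exact hd.false
  refine notMem_extremePoints_of_sub_mem_of_add_mem (toPlane_ne_zero hd0) ?_ ?_ hz
  · convert hull (i := n - 1) (by lia) (by lia) using 1
    rw [← map_sub]
    congr 1
    module
  · convert hull (i := n + 1) (by lia) (by lia) using 1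
    rw [← map_add]
    congr 1
    module

lemma eq_of_toPlane_mem_extremePoints (hd : 0 < d.1) (hv : 0 ≤ v.1) (hdh : height ω d ≤ 0)
    (hbh : 0 < height ω (b • d + v)) (hdv : planeDet d v = 1) (hdm : 0 < planeDet d m)
    (hmv : 0 ≤ planeDet m v) (hbm : planeDet m (b • d + v) < 0)
    (hz : toPlane m ∈ (convexHull ℝ (upperLattice ω : Set (ℝ × ℝ))).extremePoints ℝ) :
    m = v := by
  have hm := eq_smul_add_smul_of_planeDet_eq_one hdv m
  have hlt : planeDet m v < b * planeDet d m := by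
    simp only [map_add, map_smul, smul_eq_mul] at hbm
    rw [planeDet_swap m d] at hbm
    linarith
  have hf : planeDet d m = 1 :=
    eq_one_of_smul_add_smul_mem_extremePoints hd.le hv hdh hbh hmv hdm hlt.le (hm ▸ hz)
  rw [hf, one_smul] at hm
  rw [hf, mul_one] at hlt
  rw [hm, eq_zero_of_smul_add_mem_extremePoints hd hv hdh hbh hmv hlt (hm ▸ hz), zero_smul,
    zero_add]

end Edge

end UpperLattice

namespace IsCFExpansion

variable {ω : ℝ} {a : ℕ → ℤ}

lemma exists_completeQuotients (h : IsCFExpansion ω a) (hirr : Irrational ω) :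
    ∃ w : ℕ → ℝ, w 0 = ω ∧ (∀ n, a n = ⌊w n⌋) ∧ (∀ n, 0 < Int.fract (w n)) ∧
      ∀ n, w (n + 1) * Int.fract (w n) = 1 := by
  obtain ⟨w, hw0, hw⟩ := h
  have hsucc (n : ℕ) : w (n + 1) = (Int.fract (w n))⁻¹ := by
    rw [(hw n).2, (hw n).1, one_div, Int.self_sub_floor]
  have hwirr (n : ℕ) : Irrational (w n) := by
    induction n with
    | zero => rwa [hw0]
    | succ n ih =>
      rw [hsucc]
      exact (ih.sub_intCast ⌊w n⌋).inv
  have hfract (n : ℕ) : 0 < Int.fract (w n) := Int.fract_pos.2 ((hwirr n).ne_int _)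
  refine ⟨w, hw0, fun n ↦ (hw n).1, hfract, fun n ↦ ?_⟩
  rw [hsucc, inv_mul_cancel₀ (hfract n).ne']

lemma one_le (h : IsCFExpansion ω a) (hirr : Irrational ω) (n : ℕ) : 1 ≤ a (n + 1) := by
  obtain ⟨w, -, ha, hpos, hmul⟩ := h.exists_completeQuotients hirr
  rw [ha, Int.le_floor, Int.cast_one, eq_inv_of_mul_eq_one_left (hmul n)]
  exact (one_le_inv₀ (hpos n)).2 (Int.fract_lt_one _).le

end IsCFExpansion

section Convergents

/-- The convergents as lattice vectors `(qₙ₋₁, pₙ₋₁)`; the shift of the index makes room for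
`(q₋₁, p₋₁) = (0, 1)`, the vertex on the `y`-axis. -/
def convergentVec (p q : ℕ → ℤ) : ℕ → ℤ × ℤ
  | 0 => (0, 1)
  | n + 1 => (q n, p n)

variable {ω : ℝ} {a p q : ℕ → ℤ}

lemma convergentVec_add_two (h : IsConvergents a p q) (n : ℕ) : convergentVec p q (n + 2) =
    a (n + 1) • convergentVec p q (n + 1) + convergentVec p q n := by
  obtain ⟨hp0, hq0, hp1, hq1, hrec⟩ := h
  cases n with
  | zero => ext <;> simp [convergentVec, hp0, hq0, hp1, hq1]
  | succ n => exact Prod.ext (hrec n).2 (hrec n).1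

lemma planeDet_convergentVec_succ (h : IsConvergents a p q) (n : ℕ) :
    planeDet (convergentVec p q (n + 1)) (convergentVec p q n) = (-1) ^ n := by
  induction n with
  | zero => simp [convergentVec, h.1, h.2.1, planeDet_apply]
  | succ n ih =>
    rw [convergentVec_add_two h, pow_succ, ← ih]
    simp only [planeDet_apply, Prod.fst_add, Prod.snd_add, Prod.smul_fst, Prod.smul_snd,
      smul_eq_mul]
    ring

lemma planeDet_convergentVec_odd_even (h : IsConvergents a p q) (k : ℕ) :
    planeDet (convergentVec p q (2 * k + 1)) (convergentVec p q (2 * k)) = 1 := by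
  rw [planeDet_convergentVec_succ h, (even_two_mul k).neg_one_pow]

lemma fst_convergentVec_nonneg_and_succ_pos (h : IsConvergents a p q) (ha : ∀ n, 1 ≤ a (n + 1))
    (n : ℕ) : 0 ≤ (convergentVec p q n).1 ∧ 0 < (convergentVec p q (n + 1)).1 := by
  induction n with
  | zero => simp [convergentVec, h.1, h.2.1]
  | succ n ih =>
    refine ⟨ih.2.le, ?_⟩
    rw [convergentVec_add_two h, Prod.fst_add, Prod.smul_fst, smul_eq_mul]
    exact add_pos_of_pos_of_nonneg (mul_pos (by linarith [ha n]) ih.2) ih.1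

-- Only for even indices: `q₀ = q₁` when `a₁ = 1`.
lemma fst_convergentVec_even_lt (h : IsConvergents a p q) (ha : ∀ n, 1 ≤ a (n + 1)) (k : ℕ) :
    (convergentVec p q (2 * k)).1 < (convergentVec p q (2 * k + 1)).1 := by
  cases k with
  | zero => simp [convergentVec, h.1, h.2.1]
  | succ k =>
    have hpos := fun n ↦ (fst_convergentVec_nonneg_and_succ_pos h ha n).2
    rw [show 2 * (k + 1) + 1 = 2 * k + 1 + 2 by ring, convergentVec_add_two h, Prod.fst_add,
      Prod.smul_fst, smul_eq_mul]
    exact lt_add_of_le_of_pos (le_mul_of_one_le_left (hpos _).le (ha _)) (hpos _)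

lemma height_convergentVec_succ (h : IsConvergents a p q) {w : ℕ → ℝ} (ha : ∀ n, a n = ⌊w n⌋)
    (hw : ∀ n, w (n + 1) * Int.fract (w n) = 1) (n : ℕ) :
    height (w 0) (convergentVec p q (n + 1)) =
      -Int.fract (w n) * height (w 0) (convergentVec p q n) := by
  induction n with
  | zero =>
    simp [convergentVec, h.1, h.2.1, height_apply, ha, ← Int.self_sub_floor]
  | succ n ih =>
    rw [convergentVec_add_two h, map_add, map_zsmul, zsmul_eq_mul, ha, ← Int.self_sub_floor]
    linear_combination
      w (n + 1) * ih - height (w 0) (convergentVec p q n) * hw n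

lemma height_convergentVec_alternates (hirr : Irrational ω) (hcf : IsCFExpansion ω a)
    (h : IsConvergents a p q) (k : ℕ) : 0 < height ω (convergentVec p q (2 * k)) ∧
      height ω (convergentVec p q (2 * k + 1)) < 0 := by
  obtain ⟨w, rfl, ha, hpos, hmul⟩ := hcf.exists_completeQuotients hirr
  have hstep := height_convergentVec_succ h ha hmul
  have hodd {n : ℕ} (hn : 0 < height (w 0) (convergentVec p q n)) :
      height (w 0) (convergentVec p q (n + 1)) < 0 := by
    rw [hstep]
    exact mul_neg_of_neg_of_pos (neg_neg_of_pos (hpos n)) hn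
  have heven : 0 < height (w 0) (convergentVec p q (2 * k)) := by
    induction k with
    | zero => simp [convergentVec, height_apply]
    | succ k ih =>
      rw [mul_add_one, hstep]
      exact mul_pos_of_neg_of_neg (neg_neg_of_pos (hpos _)) (hodd ih)
  exact ⟨heven, hodd heven⟩

end Convergents

section Sail

variable {ω : ℝ} {a p q : ℕ → ℤ}

lemma exists_nonneg_succ_neg_of_succ_lt {s : ℕ → ℤ} (h0 : 0 ≤ s 0) (hs : ∀ k, s (k + 1) < s k) :
    ∃ k, 0 ≤ s k ∧ s (k + 1) < 0 := by
  by_contra! hnonneg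
  have hle (k : ℕ) : 0 ≤ s k ∧ s k ≤ s 0 - k := by
    induction k with
    | zero => simpa using h0
    | succ k ih =>
      have := hs k
      exact ⟨hnonneg k ih.1, by push_cast; lia⟩
  have := hle ((s 0).toNat + 1)
  lia

lemma toPlane_convergentVec_even_mem_extremePoints (hirr : Irrational ω)
    (hcf : IsCFExpansion ω a) (h : IsConvergents a p q) (k : ℕ) :
    toPlane (convergentVec p q (2 * k)) ∈
      (convexHull ℝ (upperLattice ω : Set (ℝ × ℝ))).extremePoints ℝ := by
  have ha := hcf.one_le hirr
  obtain ⟨heven, hodd⟩ := height_convergentVec_alternates hirr hcf h k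
  exact toPlane_mem_extremePoints_of_planeDet_eq_one hirr
    (fst_convergentVec_nonneg_and_succ_pos h ha _).1 (fst_convergentVec_even_lt h ha k) heven
    hodd.le (planeDet_convergentVec_odd_even h k)

lemma exists_convergentVec_sector (hirr : Irrational ω) (hcf : IsCFExpansion ω a)
    (h : IsConvergents a p q) {m : ℤ × ℤ} (hm : 0 ≤ m.1) (hmh : 0 < height ω m) :
    ∃ k, 0 ≤ planeDet m (convergentVec p q (2 * k)) ∧
      planeDet m (convergentVec p q (2 * (k + 1))) < 0 := by
  refine exists_nonneg_succ_neg_of_succ_lt (s := fun k ↦ planeDet m (convergentVec p q (2 * k)))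
    (by simpa [convergentVec, planeDet_apply] using hm) fun k ↦ ?_
  have ha := hcf.one_le hirr
  have hdet := one_le_planeDet hm hmh (fst_convergentVec_nonneg_and_succ_pos h ha (2 * k)).2
    (height_convergentVec_alternates hirr hcf h k).2.le
  simp only [mul_add_one, convergentVec_add_two h, map_add, map_smul, smul_eq_mul,
    planeDet_swap m (convergentVec p q (2 * k + 1))]
  linarith [mul_pos (one_pos.trans_le (ha (2 * k))) (one_pos.trans_le hdet)]

lemma exists_eq_convergentVec_of_mem_extremePoints (hirr : Irrational ω)
    (hcf : IsCFExpansion ω a) (h : IsConvergents a p q) {z : ℝ × ℝ}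
    (hz : z ∈ (convexHull ℝ (upperLattice ω : Set (ℝ × ℝ))).extremePoints ℝ) :
    ∃ k, toPlane (convergentVec p q (2 * k)) = z := by
  obtain ⟨m, hm, hmh, rfl⟩ :=
    exists_toPlane_eq_of_mem_upperLattice hirr (extremePoints_convexHull_subset hz)
  obtain ⟨k, hk, hk'⟩ := exists_convergentVec_sector hirr hcf h hm hmh
  obtain ⟨hv, hd⟩ := fst_convergentVec_nonneg_and_succ_pos h (hcf.one_le hirr) (2 * k)
  have hdh := (height_convergentVec_alternates hirr hcf h k).2.le
  have hbh := (height_convergentVec_alternates hirr hcf h (k + 1)).1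
  rw [mul_add_one, convergentVec_add_two h] at hbh hk'
  have hmv := eq_of_toPlane_mem_extremePoints hd hv hdh hbh
    (planeDet_convergentVec_odd_even h k) (one_le_planeDet hm hmh hd hdh) hk hk' hz
  exact ⟨k, congrArg toPlane hmv.symm⟩

lemma extremePoints_convexHull_upperLattice (hirr : Irrational ω) (hcf : IsCFExpansion ω a)
    (h : IsConvergents a p q) :
    (convexHull ℝ (upperLattice ω : Set (ℝ × ℝ))).extremePoints ℝ =
      Set.range fun k ↦ toPlane (convergentVec p q (2 * k)) :=
  Set.Subset.antisymm (fun _ ↦ exists_eq_convergentVec_of_mem_extremePoints hirr hcf h)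
    (Set.range_subset_iff.2 (toPlane_convergentVec_even_mem_extremePoints hirr hcf h))

lemma range_even_convergentVec (p q : ℕ → ℤ) :
    Set.range (fun k ↦ toPlane (convergentVec p q (2 * k))) = {((0 : ℝ), (1 : ℝ))} ∪
      {v : ℝ × ℝ | ∃ k : ℕ, v = ((q (2 * k + 1) : ℝ), (p (2 * k + 1) : ℝ))} := by
  rw [← Nat.range_of_succ]
  congr 1
  · simp [convergentVec, toPlane_apply]
  · ext v
    exact exists_congr fun k ↦ eq_comm

end Sail

theorem klein_upper_sail_general (ω : ℝ) (hirr : Irrational ω)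
    (a p q : ℕ → ℤ) (hcf : IsCFExpansion ω a) (hconv : IsConvergents a p q) :
    Set.extremePoints ℝ (convexHull ℝ {v : ℝ × ℝ | ∃ x y : ℤ,
        v = ((x : ℝ), (y : ℝ)) ∧ 0 ≤ x ∧ ω * (x : ℝ) ≤ (y : ℝ) ∧ (x, y) ≠ ((0 : ℤ), (0 : ℤ))}) =
      {((0 : ℝ), (1 : ℝ))} ∪
        {v : ℝ × ℝ | ∃ k : ℕ, v = ((q (2 * k + 1) : ℝ), (p (2 * k + 1) : ℝ))} := by
  rw [← range_even_convergentVec]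
  exact extremePoints_convexHull_upperLattice hirr hcf hconv

/-- Klein's theorem for the upper sail: for irrational `ω > 0`, the extreme points of the
convex hull of `S = {(x, y) ∈ ℤ² : x ≥ 0, y ≥ ωx, (x, y) ≠ (0, 0)}` are exactly `(0, 1)`
together with the odd-index convergents `(q₂ₖ₊₁, p₂ₖ₊₁)`. -/
theorem klein_upper_sail (ω : ℝ) (hω : 0 < ω) (hirr : Irrational ω)
    (a p q : ℕ → ℤ) (hcf : IsCFExpansion ω a) (hconv : IsConvergents a p q) :
    Set.extremePoints ℝ (convexHull ℝ {v : ℝ × ℝ | ∃ x y : ℤ,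
        v = ((x : ℝ), (y : ℝ)) ∧ 0 ≤ x ∧ ω * (x : ℝ) ≤ (y : ℝ) ∧ (x, y) ≠ ((0 : ℤ), (0 : ℤ))}) =
      {((0 : ℝ), (1 : ℝ))} ∪
        {v : ℝ × ℝ | ∃ k : ℕ, v = ((q (2 * k + 1) : ℝ), (p (2 * k + 1) : ℝ))} :=
  klein_upper_sail_general ω hirr a p q hcf hconv
end

section
/- The LLS sequence of the Klein sail equals the continued fraction of ω: let ω > 1 be irrational with continued fraction expansion ω = [a₀; a₁, a₂, …] and convergents pₖ/qₖ, and define the sail vertices A₋₁ = (1, 0) and Aₖ = (q₂ₖ, p₂ₖ) for k ≥ 0. Then for every k ≥ 0: (i) the integer length ll(Aₖ₋₁Aₖ) equals a₂ₖ, and (ii) the integer sine lsin∠Aₖ₋₁AₖAₖ₊₁ equals a₂ₖ₊₁. -/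
/-- The integer length of the segment `PQ` between two lattice points: the number of lattice
points in the open segment plus one, equivalently the gcd of the coordinates of `Q - P`. -/
def llen (P Q : ℤ × ℤ) : ℕ := Int.gcd (Q.1 - P.1) (Q.2 - P.2)

/-- The determinant of the 2×2 matrix with columns `u` and `v`. -/
def det2 (u v : ℤ × ℤ) : ℤ := u.1 * v.2 - u.2 * v.1

/-- The integer sine of the angle `∠ABC`. -/
noncomputable def lsin (A B C : ℤ × ℤ) : ℚ :=
  (|det2 (A - B) (C - B)| : ℚ) / ((llen A B : ℚ) * (llen B C : ℚ))

/-!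
With `v₋₂ = (1, 0)`, `v₋₁ = (0, 1)` and `vₙ = (qₙ, pₙ)`, the convergents satisfy the single
recurrence `vₙ = aₙ vₙ₋₁ + vₙ₋₂`, and the sail vertices are `Aₖ = v₂ₖ`. Consecutive vectors have
determinant `±1`, so each `vₙ` is primitive. The edge `Aₖ - Aₖ₋₁ = a₂ₖ v₂ₖ₋₁` thus has integer
length `|a₂ₖ|`. The integer sine depends only on the primitive directions of the two edges, so at
`Aₖ` it equals `|det (v₂ₖ₋₁, v₂ₖ₊₁)| = |a₂ₖ₊₁| |det (v₂ₖ₋₁, v₂ₖ)| = |a₂ₖ₊₁|`. Finally, all `aₙ` are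
positive, because every complete quotient of an irrational `ω > 1` exceeds `1`.
-/

lemma llen_of_sub_eq_smul {P Q u : ℤ × ℤ} {m : ℤ} (hu : IsCoprime u.1 u.2)
    (h : Q - P = m • u) : (llen P Q : ℤ) = |m| := by
  have hfst : Q.1 - P.1 = m * u.1 := congrArg Prod.fst h
  have hsnd : Q.2 - P.2 = m * u.2 := congrArg Prod.snd h
  rw [llen, hfst, hsnd, Int.gcd_mul_left, Int.isCoprime_iff_gcd_eq_one.mp hu, mul_one,
    Int.natCast_natAbs]

lemma lsin_of_sub_eq_smul {A B C u v : ℤ × ℤ} {m n : ℤ} (hu : IsCoprime u.1 u.2)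
    (hv : IsCoprime v.1 v.2) (hm : m ≠ 0) (hn : n ≠ 0) (hAB : B - A = m • u)
    (hBC : C - B = n • v) : lsin A B C = |det2 u v| := by
  have hdet : |det2 (A - B) (C - B)| = |m| * |n| * |det2 u v| := by
    have : det2 (A - B) (C - B) = -(m * n * det2 u v) := by
      rw [← neg_sub B A, hAB, hBC]
      simp only [det2, Prod.fst_neg, Prod.snd_neg, Prod.smul_fst, Prod.smul_snd, smul_eq_mul]
      ring
    rw [this, abs_neg, abs_mul, abs_mul]
  have hlenAB : (llen A B : ℚ) = |m| := mod_cast llen_of_sub_eq_smul hu hAB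
  have hlenBC : (llen B C : ℚ) = |n| := mod_cast llen_of_sub_eq_smul hv hBC
  have hdetℚ : |(det2 (A - B) (C - B) : ℚ)| = |m| * |n| * |det2 u v| := mod_cast hdet
  rw [lsin, hdetℚ, hlenAB, hlenBC]
  field_simp

lemma isCoprime_of_abs_det2_eq_one {u v : ℤ × ℤ} (h : |det2 u v| = 1) : IsCoprime u.1 u.2 := by
  rcases eq_or_eq_neg_of_abs_eq h with h | h <;> rw [det2] at h
  · exact ⟨v.2, -v.1, by linarith⟩
  · exact ⟨-v.2, v.1, by linarith⟩

section Recurrence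

variable {a : ℕ → ℤ} {v : ℕ → ℤ × ℤ} (hv : ∀ n, v (n + 2) = a n • v (n + 1) + v n)

include hv

lemma det2_add_two_of_recurrence (n : ℕ) :
    det2 (v n) (v (n + 2)) = a n * det2 (v n) (v (n + 1)) := by
  simp only [hv, det2, Prod.fst_add, Prod.snd_add, Prod.smul_fst, Prod.smul_snd, smul_eq_mul]
  ring

lemma det2_succ_of_recurrence (n : ℕ) :
    det2 (v (n + 1)) (v (n + 2)) = -det2 (v n) (v (n + 1)) := by
  simp only [hv, det2, Prod.fst_add, Prod.snd_add, Prod.smul_fst, Prod.smul_snd, smul_eq_mul]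
  ring

lemma abs_det2_of_recurrence (n : ℕ) :
    |det2 (v n) (v (n + 1))| = |det2 (v 0) (v 1)| := by
  induction n with
  | zero => rfl
  | succ n ih => rw [det2_succ_of_recurrence hv, abs_neg, ih]

variable (h₀ : |det2 (v 0) (v 1)| = 1)

include h₀

lemma isCoprime_of_recurrence (n : ℕ) : IsCoprime (v n).1 (v n).2 :=
  isCoprime_of_abs_det2_eq_one ((abs_det2_of_recurrence hv n).trans h₀)

lemma llen_of_recurrence (n : ℕ) : (llen (v n) (v (n + 2)) : ℤ) = |a n| :=
  llen_of_sub_eq_smul (isCoprime_of_recurrence hv h₀ (n + 1)) (sub_eq_of_eq_add (hv n))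

lemma lsin_of_recurrence {n : ℕ} (hn : a n ≠ 0) (hn₂ : a (n + 2) ≠ 0) :
    lsin (v n) (v (n + 2)) (v (n + 4)) = |a (n + 1)| := by
  have hdet : |det2 (v (n + 1)) (v (n + 3))| = |a (n + 1)| := by
    rw [det2_add_two_of_recurrence hv, abs_mul, abs_det2_of_recurrence hv, h₀, mul_one]
  rw [lsin_of_sub_eq_smul (isCoprime_of_recurrence hv h₀ (n + 1))
    (isCoprime_of_recurrence hv h₀ (n + 3)) hn hn₂ (sub_eq_of_eq_add (hv n))
    (sub_eq_of_eq_add (hv (n + 2))), hdet]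

end Recurrence

/-- The vectors `(qₙ, pₙ)` of the convergents, with the index shifted by two so that the sequence
starts at `(q₋₂, p₋₂) = (1, 0)` and `(q₋₁, p₋₁) = (0, 1)`. -/
def convergentVector (p q : ℕ → ℤ) : ℕ → ℤ × ℤ
  | 0 => (1, 0)
  | 1 => (0, 1)
  | n + 2 => (q n, p n)

lemma IsConvergents.convergentVector_add_two {a p q : ℕ → ℤ} (h : IsConvergents a p q) (n : ℕ) :
    convergentVector p q (n + 2) =
      a n • convergentVector p q (n + 1) + convergentVector p q n := by
  obtain ⟨hp₀, hq₀, hp₁, hq₁, hrec⟩ := h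
  match n with
  | 0 => simp [convergentVector, hp₀, hq₀]
  | 1 => simp [convergentVector, hp₀, hq₀, hp₁, hq₁]
  | k + 2 => simp [convergentVector, hrec k]

lemma IsCFExpansion.floor_eq {ω : ℝ} {a : ℕ → ℤ} (h : IsCFExpansion ω a) : a 0 = ⌊ω⌋ := by
  obtain ⟨w, rfl, hw⟩ := h
  exact (hw 0).1

lemma IsCFExpansion.pos_succ {ω : ℝ} {a : ℕ → ℤ} (h : IsCFExpansion ω a) (hω : Irrational ω)
    (n : ℕ) : 0 < a (n + 1) := by
  obtain ⟨w, rfl, hw⟩ := h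
  have hstep (n : ℕ) : w (n + 1) = (Int.fract (w n))⁻¹ := by
    rw [(hw n).2, (hw n).1, one_div, Int.fract]
  have hirr (n : ℕ) : Irrational (w n) := by
    induction n with
    | zero => exact hω
    | succ n ih => exact hstep n ▸ (ih.sub_intCast ⌊w n⌋).inv
  have hfract : 0 < Int.fract (w n) := Int.fract_pos.mpr ((hirr n).ne_int _)
  rw [(hw (n + 1)).1, Int.floor_pos, hstep]
  exact (one_le_inv₀ hfract).mpr (Int.fract_lt_one _).le

lemma IsCFExpansion.pos {ω : ℝ} {a : ℕ → ℤ} (h : IsCFExpansion ω a) (hω : 1 ≤ ω)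
    (hirr : Irrational ω) : ∀ n, 0 < a n
  | 0 => h.floor_eq ▸ Int.floor_pos.mpr hω
  | n + 1 => h.pos_succ hirr n

theorem lls_sequence_of_klein_sail_general {a p q : ℕ → ℤ} (hconv : IsConvergents a p q)
    (ha : ∀ k, a (2 * k) ≠ 0) {A : ℕ → ℤ × ℤ} (hA0 : A 0 = (1, 0))
    (hA : ∀ k, A (k + 1) = (q (2 * k), p (2 * k))) (k : ℕ) :
    (llen (A k) (A (k + 1)) : ℤ) = |a (2 * k)| ∧
      lsin (A k) (A (k + 1)) (A (k + 2)) = |a (2 * k + 1)| := by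
  have hvertex : ∀ k, A k = convergentVector p q (2 * k)
    | 0 => hA0
    | k + 1 => hA k
  have hrec := hconv.convergentVector_add_two
  have hdet : |det2 (convergentVector p q 0) (convergentVector p q 1)| = 1 := rfl
  rw [hvertex k, hvertex (k + 1), hvertex (k + 2)]
  exact ⟨llen_of_recurrence hrec hdet (2 * k), lsin_of_recurrence hrec hdet (ha k) (ha (k + 1))⟩

/-- The LLS sequence of the Klein sail equals the continued fraction of `ω`: with sail
vertices `A₋₁ = (1,0)`, `Aₖ = (q₂ₖ, p₂ₖ)` (here `A (k+1)` stands for `Aₖ`), for every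
`k ≥ 0` the integer length `ll(Aₖ₋₁Aₖ)` equals `a₂ₖ` and the integer sine
`lsin∠Aₖ₋₁AₖAₖ₊₁` equals `a₂ₖ₊₁`. -/
theorem lls_sequence_of_klein_sail (ω : ℝ) (hω : 1 < ω) (hirr : Irrational ω)
    (a p q : ℕ → ℤ) (hcf : IsCFExpansion ω a) (hconv : IsConvergents a p q)
    (A : ℕ → ℤ × ℤ) (hA0 : A 0 = (1, 0))
    (hA : ∀ k : ℕ, A (k + 1) = (q (2 * k), p (2 * k))) :
    ∀ k : ℕ, ((llen (A k) (A (k + 1)) : ℤ) = a (2 * k)) ∧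
      lsin (A k) (A (k + 1)) (A (k + 2)) = (a (2 * k + 1) : ℚ) := by
  have hpos := hcf.pos hω.le hirr
  simpa only [abs_of_pos (hpos _)] using
    lls_sequence_of_klein_sail_general hconv (fun k ↦ (hpos (2 * k)).ne') hA0 hA
end
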